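/- Let p, q ∈ R be idempotents such that p + q and 1 - p - q are group invertible. Then p*q + q*p is group invertible; indeed p*q + q*p = -(p+q)*(1-p-q) = -(1-p-q)*(p+q) and (p*q + q*p)^# = -(p+q)^# * (1-p-q)^#. -/

import Mathlib

/-!
Put `s = p + q`. Since `p` and `q` are idempotent, `s² = s + (p q + q p)`, that is,
`p q + q p = -s (1 - s)`. A group inverse of an element commutes with everything that element
commutes with, so `s`, `1 - s` and their group inverses all commute with one another; hence the
product of the group inverses is a group inverse of the product.
-/

variable {R : Type*} [Ring R]

/-- `c` is a group inverse of `a`. -/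
def IsGroupInvOf (a c : R) : Prop := a * c * a = a ∧ c * a * c = c ∧ a * c = c * a

/-- `a` is group invertible. -/
def GroupInvertible (a : R) : Prop := ∃ c, IsGroupInvOf a c

/-- The group inverse `a^#` (junk value `0` if it does not exist). -/
noncomputable def gi (a : R) : R :=
  haveI := Classical.dec (GroupInvertible a)
  if h : GroupInvertible a then h.choose else 0

/-- The spectral idempotent `a^π = 1 - a * a^#`. -/
noncomputable def sp (a : R) : R := 1 - a * gi a

namespace IsGroupInvOf

variable {a b c d x : R}

-- With `e = c * a`, the relations `a = a * e = e * a` show that `e * x` and `x * e` are both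
-- equal to `e * x * e`.
theorem commute_mul_self (h : IsGroupInvOf a c) (hx : Commute a x) : Commute (c * a) x := by
  obtain ⟨haca, -, hac⟩ := h
  calc c * a * x = c * x * a := hx.right_comm c
    _ = c * x * (a * (c * a)) := by rw [← mul_assoc a, haca]
    _ = c * a * x * (c * a) := by rw [← mul_assoc, ← hx.right_comm c]
    _ = c * a * x * (a * c) := by rw [hac]
    _ = c * a * (a * x) * c := by rw [hx.eq]; simp only [mul_assoc]
    _ = a * c * a * x * c := by rw [hac]; simp only [mul_assoc]
    _ = a * x * c := by rw [haca]
    _ = x * (c * a) := by rw [hx.eq, mul_assoc, hac]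

theorem commute (h : IsGroupInvOf a c) (hx : Commute a x) : Commute c x := by
  have hcax : c * a * x = x * (c * a) := h.commute_mul_self hx
  obtain ⟨-, hcac, hac⟩ := h
  calc c * x = c * (c * a) * x := by rw [← hac, ← mul_assoc, hcac]
    _ = c * x * (a * c) := by rw [mul_assoc, hcax, ← mul_assoc, hac]
    _ = c * a * x * c := by rw [← mul_assoc, ← hx.right_comm c]
    _ = x * (c * a * c) := by rw [hcax, mul_assoc]
    _ = x * c := by rw [hcac]

theorem unique (hc : IsGroupInvOf a c) (hd : IsGroupInvOf a d) : c = d := by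
  obtain ⟨haca, hcac, hac⟩ := hc
  obtain ⟨hada, hdad, had⟩ := hd
  have hca_da : c * a = d * a := by
    calc c * a = c * (a * d * a) := by rw [hada]
      _ = c * a * (a * d) := by rw [mul_assoc a, ← had, mul_assoc]
      _ = a * c * a * d := by rw [← hac, mul_assoc (a * c)]
      _ = d * a := by rw [haca, had]
  calc c = c * a * c := hcac.symm
    _ = d * (a * c) := by rw [hca_da, mul_assoc]
    _ = d * (a * d) := by rw [hac, hca_da, had]
    _ = d := by rw [← mul_assoc, hdad]

theorem neg (h : IsGroupInvOf a c) : IsGroupInvOf (-a) (-c) := by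
  simpa only [IsGroupInvOf, neg_mul, mul_neg, neg_neg, neg_inj] using h

theorem mul (hc : IsGroupInvOf a c) (hd : IsGroupInvOf b d) (hab : Commute a b) :
    IsGroupInvOf (a * b) (c * d) := by
  have hcb : Commute c b := hc.commute hab
  have hda : Commute d a := hd.commute hab.symm
  have hdc : Commute d c := hd.commute hcb.symm
  have habcd : a * b * (c * d) = a * c * (b * d) := hcb.symm.mul_mul_mul_comm a d
  have hcdab : c * d * (a * b) = c * a * (d * b) := hda.mul_mul_mul_comm c b
  refine ⟨?_, ?_, ?_⟩
  · calc a * b * (c * d) * (a * b) = a * c * a * (b * d * b) := by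
          rw [habcd, (hab.symm.mul_left hda).mul_mul_mul_comm]
      _ = a * b := by rw [hc.1, hd.1]
  · calc c * d * (a * b) * (c * d) = c * a * c * (d * b * d) := by
          rw [hcdab, (hdc.mul_left hcb.symm).mul_mul_mul_comm]
      _ = c * d := by rw [hc.2.1, hd.2.1]
  · rw [habcd, hcdab, hc.2.2, hd.2.2]

end IsGroupInvOf

theorem GroupInvertible.isGroupInvOf_gi {a : R} (h : GroupInvertible a) :
    IsGroupInvOf a (gi a) := by
  rw [gi, dif_pos h]
  exact h.choose_spec

theorem IsGroupInvOf.gi_eq {a c : R} (h : IsGroupInvOf a c) : gi a = c :=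
  (GroupInvertible.isGroupInvOf_gi ⟨c, h⟩).unique h

theorem anticommutator_eq_neg_add_mul_one_sub_sub {S : Type*} [NonAssocRing S] {p q : S}
    (hp : IsIdempotentElem p) (hq : IsIdempotentElem q) :
    p * q + q * p = -((p + q) * (1 - p - q)) := by
  simp only [mul_sub, add_mul, mul_one, hp.eq, hq.eq]
  abel

theorem group_inv_anticommutator (p q : R) (hp : p * p = p) (hq : q * q = q)
    (hsum : GroupInvertible (p + q)) (hbar : GroupInvertible (1 - p - q)) :
    GroupInvertible (p * q + q * p) ∧
      p * q + q * p = -((p + q) * (1 - p - q)) ∧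
      p * q + q * p = -((1 - p - q) * (p + q)) ∧
      gi (p * q + q * p) = -(gi (p + q) * gi (1 - p - q)) := by
  have heq : p * q + q * p = -((p + q) * (1 - p - q)) :=
    anticommutator_eq_neg_add_mul_one_sub_sub hp hq
  have hcomm : Commute (p + q) (1 - p - q) := by
    rw [sub_sub]
    exact (Commute.one_right _).sub_right (Commute.refl _)
  have hinv : IsGroupInvOf (p * q + q * p) (-(gi (p + q) * gi (1 - p - q))) := by
    rw [heq]
    exact (hsum.isGroupInvOf_gi.mul hbar.isGroupInvOf_gi hcomm).neg
  exact ⟨⟨_, hinv⟩, heq, hcomm.eq ▸ heq, hinv.gi_eq⟩
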